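/- Let A be a Hopf algebra over a field k with bijective antipode and let P ∈ A be a two-sided group-like projection. Then the left coideal subalgebra N_P is a semisimple ring. -/

import Mathlib

open scoped TensorProduct

noncomputable section

variable (k : Type*) [Field k] {A : Type*} [Ring A] [HopfAlgebra k A]

/-- `P` is a right group-like projection: a nonzero idempotent with
`Δ(P)(1 ⊗ P) = P ⊗ P = (1 ⊗ P)Δ(P)`. -/
def IsRightGroupLikeProjection (P : A) : Prop :=
  P ≠ 0 ∧ P * P = P ∧
    Coalgebra.comul (R := k) P * ((1 : A) ⊗ₜ[k] P) = P ⊗ₜ[k] P ∧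
    ((1 : A) ⊗ₜ[k] P) * Coalgebra.comul (R := k) P = P ⊗ₜ[k] P

/-- `P` is a left group-like projection: a nonzero idempotent with
`Δ(P)(P ⊗ 1) = P ⊗ P = (P ⊗ 1)Δ(P)`. -/
def IsLeftGroupLikeProjection (P : A) : Prop :=
  P ≠ 0 ∧ P * P = P ∧
    Coalgebra.comul (R := k) P * (P ⊗ₜ[k] (1 : A)) = P ⊗ₜ[k] P ∧
    (P ⊗ₜ[k] (1 : A)) * Coalgebra.comul (R := k) P = P ⊗ₜ[k] P

/-- A two-sided group-like projection. -/
def IsTwoSidedGroupLikeProjection (P : A) : Prop :=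
  IsRightGroupLikeProjection k P ∧ IsLeftGroupLikeProjection k P

/-- `N_P^l = {x : (1 ⊗ P)Δ(x) = x ⊗ P}`. -/
def NPlSet (P : A) : Set A :=
  {x : A | ((1 : A) ⊗ₜ[k] P) * Coalgebra.comul (R := k) x = x ⊗ₜ[k] P}

/-- `N_P^r = {x : Δ(x)(1 ⊗ P) = x ⊗ P}`. -/
def NPrSet (P : A) : Set A :=
  {x : A | Coalgebra.comul (R := k) x * ((1 : A) ⊗ₜ[k] P) = x ⊗ₜ[k] P}

/-- `N_P = N_P^l ∩ N_P^r`. -/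
def NPSet (P : A) : Set A := NPlSet k P ∩ NPrSet k P

/-- `V_P = {(μ ⊗ id)(Δ(P)) : μ ∈ A*}`, the smallest left coideal containing `P`. -/
def VPSet (P : A) : Set A :=
  {x : A | ∃ μ : A →ₗ[k] k,
    x = TensorProduct.lid k A ((TensorProduct.map μ LinearMap.id) (Coalgebra.comul (R := k) P))}

/-- A submodule `N ⊆ A` is a left coideal if `Δ(N) ⊆ A ⊗ N`. -/
def IsLeftCoideal (N : Submodule k A) : Prop :=
  ∀ x ∈ N, Coalgebra.comul (R := k) x ∈
    LinearMap.range (TensorProduct.map (LinearMap.id : A →ₗ[k] A) N.subtype)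

/-- A subalgebra `N ⊆ A` is a left coideal subalgebra if `Δ(N) ⊆ A ⊗ N`. -/
def IsLeftCoidealSubalgebra (N : Subalgebra k A) : Prop :=
  IsLeftCoideal k (Subalgebra.toSubmodule N)


/-!
Write `S` for the antipode and `e = S(P₁) ⊗ P₂`. Then `e` is a separability element of `N_P`:

* its product is `ε(P) = 1`;
* for `x ∈ N_P`, substituting `x ⊗ P = (1 ⊗ P)Δ(x)` into `x S(P₁) ⊗ P₂` and cancelling
  `x₁ S(x₂) = ε(x)` gives `x S(P₁) ⊗ P₂ = S(P₁) ⊗ P₂ x`;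
* its second legs lie in `V_P ⊆ N_P` because `P` is right group-like, and its first legs are the
  images under `S` of the first legs of `Δ(P)`, which satisfy the mirrored equations of `N_P`
  because `P` is left group-like; as `S(P) = P` and `S` reverses both product and coproduct, `S`
  turns these equations into those of `N_P`.

Averaging linear projections against a separability element, as in Maschke's theorem, shows that
every module over `N_P` is semisimple.
-/

open HopfAlgebra TensorProduct LinearMap WithConv
open Coalgebra (comul counit coassoc_apply coassoc_symm_apply)

section Slices

variable {R M M' V V' : Type*} [CommSemiring R] [AddCommMonoid M] [Module R M]
  [AddCommMonoid M'] [Module R M'] [AddCommMonoid V] [Module R V] [AddCommMonoid V'] [Module R V']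

variable (V) in
/-- The slice map `μ ⊗ id : M ⊗ V → V` of a functional `μ` on the left tensor factor. -/
def leftSlice (μ : M →ₗ[R] R) : M ⊗[R] V →ₗ[R] V :=
  (TensorProduct.lid R V).toLinearMap ∘ₗ μ.rTensor V

variable (M) in
/-- The slice map `id ⊗ ν : M ⊗ V → M` of a functional `ν` on the right tensor factor. -/
def rightSlice (ν : V →ₗ[R] R) : M ⊗[R] V →ₗ[R] M :=
  (TensorProduct.rid R M).toLinearMap ∘ₗ ν.lTensor M

@[simp]
lemma leftSlice_tmul (μ : M →ₗ[R] R) (m : M) (v : V) : leftSlice V μ (m ⊗ₜ v) = μ m • v := rfl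

@[simp]
lemma rightSlice_tmul (ν : V →ₗ[R] R) (m : M) (v : V) : rightSlice M ν (m ⊗ₜ v) = ν v • m := rfl

lemma leftSlice_lTensor (μ : M →ₗ[R] R) (f : V →ₗ[R] V') (t : M ⊗[R] V) :
    leftSlice V' μ (f.lTensor M t) = f (leftSlice V μ t) := by
  induction t <;> simp_all

lemma leftSlice_rTensor (μ : M' →ₗ[R] R) (f : M →ₗ[R] M') (t : M ⊗[R] V) :
    leftSlice V μ (f.rTensor V t) = leftSlice V (μ ∘ₗ f) t := by
  induction t <;> simp_all

lemma rightSlice_rTensor (ν : V →ₗ[R] R) (f : M →ₗ[R] M') (t : M ⊗[R] V) :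
    rightSlice M' ν (f.rTensor V t) = f (rightSlice M ν t) := by
  induction t <;> simp_all

lemma rTensor_leftSlice (μ : M →ₗ[R] R) (t : (M ⊗[R] V) ⊗[R] V') :
    (leftSlice V μ).rTensor V' t = leftSlice (V ⊗[R] V') μ (TensorProduct.assoc R M V V' t) := by
  have : (leftSlice V μ).rTensor V' =
      leftSlice (V ⊗[R] V') μ ∘ₗ (TensorProduct.assoc R M V V').toLinearMap := by
    ext; simp [smul_tmul']
  exact congr($this t)

lemma lTensor_rightSlice (ν : V' →ₗ[R] R) (t : M ⊗[R] (V ⊗[R] V')) :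
    (rightSlice V ν).lTensor M t =
      rightSlice (M ⊗[R] V) ν ((TensorProduct.assoc R M V V').symm t) := by
  have : (rightSlice V ν).lTensor M =
      rightSlice (M ⊗[R] V) ν ∘ₗ (TensorProduct.assoc R M V V').symm.toLinearMap := by
    ext; simp
  exact congr($this t)

lemma ext_leftSlice [Module.Free R M] {s t : M ⊗[R] V}
    (h : ∀ μ : M →ₗ[R] R, leftSlice V μ s = leftSlice V μ t) : s = t := by
  let b := Module.Free.chooseBasis R M
  refine (equivFinsuppOfBasisLeft (N := V) b).injective (Finsupp.ext fun i => ?_)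
  rw [equivFinsuppOfBasisLeft_apply, equivFinsuppOfBasisLeft_apply]
  exact h (b.coord i)

lemma ext_rightSlice [Module.Free R V] {s t : M ⊗[R] V}
    (h : ∀ ν : V →ₗ[R] R, rightSlice M ν s = rightSlice M ν t) : s = t := by
  let b := Module.Free.chooseBasis R V
  refine (equivFinsuppOfBasisRight (M := M) b).injective (Finsupp.ext fun i => ?_)
  rw [equivFinsuppOfBasisRight_apply, equivFinsuppOfBasisRight_apply]
  exact h (b.coord i)

end Slices

section Coalgebra

variable {R C : Type*} [CommSemiring R] [AddCommMonoid C] [Module R C] [Coalgebra R C]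

lemma comul_leftSlice_comul (μ : C →ₗ[R] R) (c : C) :
    comul (leftSlice C μ (comul c)) = (leftSlice C μ ∘ₗ comul).rTensor C (comul c) := by
  rw [rTensor_comp_apply, rTensor_leftSlice, coassoc_apply, leftSlice_lTensor]

lemma comul_rightSlice_comul (ν : C →ₗ[R] R) (c : C) :
    comul (rightSlice C ν (comul c)) = (rightSlice C ν ∘ₗ comul).lTensor C (comul c) := by
  rw [lTensor_comp_apply, lTensor_rightSlice, coassoc_symm_apply, rightSlice_rTensor]

end Coalgebra

lemma mem_range_mapIncl_of_slices_mem {K M V : Type*} [Field K] [AddCommGroup M] [Module K M]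
    [AddCommGroup V] [Module K V] {p : Submodule K M} {q : Submodule K V} {t : M ⊗[K] V}
    (hp : ∀ ν : V →ₗ[K] K, rightSlice M ν t ∈ p) (hq : ∀ μ : M →ₗ[K] K, leftSlice V μ t ∈ q) :
    t ∈ LinearMap.range (mapIncl p q) := by
  obtain ⟨f, hf⟩ := p.subtype.exists_leftInverse_of_injective p.ker_subtype
  obtain ⟨g, hg⟩ := q.subtype.exists_leftInverse_of_injective q.ker_subtype
  have hft : (p.subtype ∘ₗ f).rTensor V t = t := ext_rightSlice fun ν => by
    rw [rightSlice_rTensor]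
    exact congr(($hf ⟨_, hp ν⟩ : M))
  have hgt : (q.subtype ∘ₗ g).lTensor M t = t := ext_leftSlice fun μ => by
    rw [leftSlice_lTensor]
    exact congr(($hg ⟨_, hq μ⟩ : V))
  refine ⟨map f g t, ?_⟩
  calc mapIncl p q (map f g t)
      = (p.subtype ∘ₗ f).rTensor V ((q.subtype ∘ₗ g).lTensor M t) := by
        simp only [mapIncl, ← LinearMap.comp_apply, ← map_comp, rTensor_comp_lTensor]
    _ = t := by rw [hgt, hft]

section Separability

section CommSemiring

variable {K B M V : Type*} [CommSemiring K] [Semiring B] [Algebra K B]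
  [AddCommMonoid M] [Module K M] [Module B M] [IsScalarTower K B M]
  [AddCommMonoid V] [Module K V] [Module B V] [IsScalarTower K B V]

/-- A separability element of a `K`-algebra `B`: a tensor `e ∈ B ⊗ B` with product `1` that
commutes with `B` for the outer bimodule structure. The right action of `x` on the second factor
is written as multiplication by `1 ⊗ x`. -/
structure IsSeparabilityElement (e : B ⊗[K] B) : Prop where
  mul'_eq_one : mul' K B e = 1
  tmul_one_mul (x : B) : (x ⊗ₜ 1) * e = e * (1 ⊗ₜ x)

/-- The average `∑ aᵢ φ(bᵢ ·)` of a linear map `φ` between `B`-modules against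
`∑ aᵢ ⊗ bᵢ ∈ B ⊗ B`, as in the proof of Maschke's theorem. -/
def average (φ : V →ₗ[K] M) : B ⊗[K] B →ₗ[K] V →ₗ[K] M :=
  TensorProduct.lift <| (llcomp K V M M).compl₁₂ (Algebra.lsmul K K M).toLinearMap
    (llcomp K V V M φ ∘ₗ (Algebra.lsmul K K V).toLinearMap)

@[simp]
lemma average_tmul (φ : V →ₗ[K] M) (a b : B) (v : V) :
    average φ (a ⊗ₜ b) v = a • φ (b • v) := rfl

lemma average_tmul_one_mul (φ : V →ₗ[K] M) (x : B) (t : B ⊗[K] B) (v : V) :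
    average φ ((x ⊗ₜ 1) * t) v = x • average φ t v := by
  induction t <;> simp_all [mul_add, mul_smul]

lemma average_mul_one_tmul (φ : V →ₗ[K] M) (x : B) (t : B ⊗[K] B) (v : V) :
    average φ (t * (1 ⊗ₜ x)) v = average φ t (x • v) := by
  induction t <;> simp_all [add_mul, mul_smul]

lemma average_apply_of_leftInverse {φ : V →ₗ[K] M} {j : M →ₗ[B] V}
    (h : Function.LeftInverse φ j) (t : B ⊗[K] B) (m : M) :
    average φ t (j m) = mul' K B t • m := by
  have hφ (b : B) : φ (b • j m) = b • m := by rw [← map_smul, h]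
  induction t <;> simp_all [add_smul, mul_smul]

lemma IsSeparabilityElement.exists_leftInverse {e : B ⊗[K] B} (he : IsSeparabilityElement e)
    {j : M →ₗ[B] V} {φ : V →ₗ[K] M} (h : Function.LeftInverse φ j) :
    ∃ ψ : V →ₗ[B] M, Function.LeftInverse ψ j := by
  have hsmul (x : B) (v : V) : average φ e (x • v) = x • average φ e v := by
    rw [← average_mul_one_tmul, ← he.tmul_one_mul, average_tmul_one_mul]
  refine ⟨{ average φ e with map_smul' := hsmul }, fun m => ?_⟩
  exact (average_apply_of_leftInverse h e m).trans (by rw [he.mul'_eq_one, one_smul])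

end CommSemiring

section Field

variable {K B : Type*} [Field K] [Ring B] [Algebra K B]

lemma IsSeparabilityElement.isSemisimpleModule {e : B ⊗[K] B} (he : IsSeparabilityElement e)
    (M : Type*) [AddCommGroup M] [Module K M] [Module B M] [IsScalarTower K B M] :
    IsSemisimpleModule B M := by
  refine { exists_isCompl := fun W => ?_ }
  obtain ⟨φ, hφ⟩ := (W.subtype.restrictScalars K).exists_leftInverse_of_injective
    (LinearMap.ker_eq_bot.mpr W.subtype_injective)
  obtain ⟨ψ, hψ⟩ := he.exists_leftInverse (j := W.subtype) (LinearMap.congr_fun hφ)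
  exact ⟨LinearMap.ker ψ, LinearMap.isCompl_of_proj hψ⟩

lemma exists_isSeparabilityElement_of_slices_mem (N : Subalgebra K B) {e : B ⊗[K] B}
    (hmul : mul' K B e = 1) (hcomm : ∀ x ∈ N, (x ⊗ₜ[K] 1) * e = e * (1 ⊗ₜ[K] x))
    (hright : ∀ ν : B →ₗ[K] K, rightSlice B ν e ∈ N)
    (hleft : ∀ μ : B →ₗ[K] K, leftSlice B μ e ∈ N) :
    ∃ e' : N ⊗[K] N, IsSeparabilityElement e' := by
  let ι : N ⊗[K] N →ₐ[K] B ⊗[K] B := Algebra.TensorProduct.map N.val N.val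
  have hι : Function.Injective ι :=
    Module.Flat.tensorProduct_mapIncl_injective_of_right N.toSubmodule N.toSubmodule
  obtain ⟨e', he' : ι e' = e⟩ :=
    mem_range_mapIncl_of_slices_mem (p := N.toSubmodule) (q := N.toSubmodule) hright hleft
  have hmul_ι (t : N ⊗[K] N) : N.val (mul' K N t) = mul' K B (ι t) := by
    induction t <;> simp_all [ι]
  refine ⟨e', ⟨Subtype.val_injective ?_, fun x => hι ?_⟩⟩
  · exact (hmul_ι e').trans (he' ▸ hmul)
  · simpa [ι, he'] using hcomm x x.2

end Field

end Separability

section Antipode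

variable {R H : Type*} [CommSemiring R] [Semiring H] [HopfAlgebra R H]

section AlgHom

variable {B : Type*} [Semiring B] [Algebra R B] (f : H →ₐ[R] B)

lemma algHom_comp_convOne :
    toConv (f.toLinearMap ∘ₗ (1 : WithConv (H →ₗ[R] H)).ofConv) = 1 := by
  ext x
  simp [LinearMap.convOne_def]

lemma algHom_convMul_comp_antipode :
    toConv f.toLinearMap * toConv (f.toLinearMap ∘ₗ antipode R) = 1 := by
  rw [← algHom_comp_convOne f, ← id_mul_antipode, algHom_comp_convMul_distrib]
  rfl

lemma algHom_comp_antipode_convMul :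
    toConv (f.toLinearMap ∘ₗ antipode R) * toConv f.toLinearMap = 1 := by
  rw [← algHom_comp_convOne f, ← antipode_mul_id, algHom_comp_convMul_distrib]
  rfl

end AlgHom

open Algebra.TensorProduct (includeLeft includeRight)

lemma includeLeft_convMul_includeRight :
    toConv (includeLeft : H →ₐ[R] H ⊗[R] H).toLinearMap *
      toConv (includeRight : H →ₐ[R] H ⊗[R] H).toLinearMap = toConv comul := by
  ext x
  simp [(Coalgebra.Repr.arbitrary R x).convMul_apply, Coalgebra.Repr.eq]

lemma includeRight_antipode_convMul_includeLeft_antipode :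
    toConv ((includeRight : H →ₐ[R] H ⊗[R] H).toLinearMap ∘ₗ antipode R) *
      toConv ((includeLeft : H →ₐ[R] H ⊗[R] H).toLinearMap ∘ₗ antipode R) =
    toConv (map (antipode R) (antipode R) ∘ₗ (TensorProduct.comm R H H).toLinearMap ∘ₗ comul) := by
  ext x
  let 𝓡 := Coalgebra.Repr.arbitrary R x
  rw [𝓡.convMul_apply]
  simp [← 𝓡.eq]

/-- The convolution inverse of `comul = includeLeft * includeRight` is both `comul ∘ S` and
`(includeRight ∘ S) * (includeLeft ∘ S)`. -/
lemma comul_antipode (x : H) :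
    comul (antipode R x) = map (antipode R) (antipode R) (TensorProduct.comm R H H (comul x)) := by
  let l : H →ₐ[R] H ⊗[R] H := includeLeft
  let r : H →ₐ[R] H ⊗[R] H := includeRight
  have hleft : toConv (r.toLinearMap ∘ₗ antipode R) * toConv (l.toLinearMap ∘ₗ antipode R) *
      toConv (comul : H →ₗ[R] H ⊗[R] H) = 1 := by
    rw [← includeLeft_convMul_includeRight, mul_assoc, ← mul_assoc (toConv (l.toLinearMap ∘ₗ _)),
      algHom_comp_antipode_convMul, one_mul, algHom_comp_antipode_convMul]
  have hinv := left_inv_eq_right_inv hleft LinearMap.comul_right_inv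
  rw [includeRight_antipode_convMul_includeLeft_antipode] at hinv
  exact congr(ofConv $hinv x).symm

lemma map_antipode_comm_mul (s t : H ⊗[R] H) :
    map (antipode R) (antipode R) (TensorProduct.comm R H H (s * t)) =
      map (antipode R) (antipode R) (TensorProduct.comm R H H t) *
        map (antipode R) (antipode R) (TensorProduct.comm R H H s) := by
  rw [← Algebra.TensorProduct.comm_toLinearEquiv]
  exact congr(antipode R $(map_mul (Algebra.TensorProduct.comm R H H) s t)).trans
    (antipode_mul_antidistrib (A := H ⊗[R] H) _ _)

lemma mul'_rTensor_antipode_mul_tmul (t : H ⊗[R] H) (a b : H) :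
    mul' R H ((antipode R).rTensor H (t * (a ⊗ₜ b))) =
      antipode R a * mul' R H ((antipode R).rTensor H t) * b := by
  induction t <;> simp_all [mul_add, add_mul, antipode_mul_antidistrib, mul_assoc]

variable (R) in
/-- The translation map `h ↦ S(h₁) ⊗ h₂` of Hopf–Galois theory. -/
def translationMap : H →ₗ[R] H ⊗[R] H := (antipode R).rTensor H ∘ₗ comul

lemma mul'_translationMap (x : H) : mul' R H (translationMap R x) = algebraMap R H (counit x) :=
  mul_antipode_rTensor_comul_apply x

lemma includeLeft_convMul_translationMap :
    toConv (includeLeft : H →ₐ[R] H ⊗[R] H).toLinearMap * toConv (translationMap R) =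
      toConv (includeRight : H →ₐ[R] H ⊗[R] H).toLinearMap := by
  have hτ : toConv (translationMap R) =
      toConv ((includeLeft : H →ₐ[R] H ⊗[R] H).toLinearMap ∘ₗ antipode R) *
        toConv (includeRight : H →ₐ[R] H ⊗[R] H).toLinearMap := by
    ext x
    let 𝓡 := Coalgebra.Repr.arbitrary R x
    rw [𝓡.convMul_apply]
    simp [translationMap, ← 𝓡.eq]
  rw [hτ, ← mul_assoc, algHom_convMul_comp_antipode, one_mul]

lemma rTensor_antipode_tmul_mul (u v : H) (t : H ⊗[R] H) :
    (antipode R).rTensor H ((u ⊗ₜ v) * t) =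
      (1 ⊗ₜ v) * (antipode R).rTensor H t * (antipode R u ⊗ₜ 1) := by
  induction t <;> simp_all [mul_add, add_mul, antipode_mul_antidistrib]

lemma sum_tmul_one_mul_rTensor_antipode {x : H} {ι : Type*} (𝓡 : Coalgebra.Repr R x ι)
    (s : H ⊗[R] H) :
    ∑ i ∈ 𝓡.index, (𝓡.left i ⊗ₜ 1) * (antipode R).rTensor H (s * comul (𝓡.right i)) =
      (antipode R).rTensor H s * (1 ⊗ₜ x) := by
  have hτ : ∑ i ∈ 𝓡.index, (𝓡.left i ⊗ₜ 1) * translationMap R (𝓡.right i) = 1 ⊗ₜ x := by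
    have := congr($(includeLeft_convMul_translationMap (R := R)) x)
    rwa [𝓡.convMul_apply] at this
  induction s with
  | zero => simp
  | add s t hs ht => simp [add_mul, mul_add, Finset.sum_add_distrib, hs, ht]
  | tmul u v =>
    have hterm (a b : H) : (a ⊗ₜ 1) * (antipode R).rTensor H ((u ⊗ₜ v) * comul b) =
        (1 ⊗ₜ v) * ((a ⊗ₜ 1) * translationMap R b) * (antipode R u ⊗ₜ 1) := by
      have hcomm : (a ⊗ₜ 1) * (1 ⊗ₜ[R] v) = (1 ⊗ₜ v) * (a ⊗ₜ 1) := by simp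
      rw [rTensor_antipode_tmul_mul, ← mul_assoc, ← mul_assoc, hcomm, ← mul_assoc]
      rfl
    simp only [hterm, ← Finset.sum_mul, ← Finset.mul_sum, hτ]
    simp

lemma tmul_one_mul_translationMap {p x : H} (hx : (1 ⊗ₜ[R] p) * comul x = x ⊗ₜ[R] p) :
    (x ⊗ₜ 1) * translationMap R p = translationMap R p * (1 ⊗ₜ x) := by
  let 𝓡 := Coalgebra.Repr.arbitrary R x
  have hsum : ∑ i ∈ 𝓡.index, 𝓡.left i ⊗ₜ (p * 𝓡.right i) = x ⊗ₜ[R] p := by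
    simpa [← 𝓡.eq, Finset.mul_sum] using hx
  let F : H ⊗[R] H →ₗ[R] H ⊗[R] H :=
    mul' R (H ⊗[R] H) ∘ₗ map includeLeft.toLinearMap (translationMap R)
  have hF (a b : H) : F (a ⊗ₜ b) = (a ⊗ₜ 1) * translationMap R b := rfl
  calc (x ⊗ₜ 1) * translationMap R p
      = ∑ i ∈ 𝓡.index, (𝓡.left i ⊗ₜ 1) * translationMap R (p * 𝓡.right i) := by
        simp only [← hF, ← map_sum, hsum]
    _ = translationMap R p * (1 ⊗ₜ x) := by
        simpa only [translationMap, LinearMap.comp_apply, Bialgebra.comul_mul] using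
          sum_tmul_one_mul_rTensor_antipode 𝓡 (comul p)

end Antipode

section TensorMul

variable {R B B' C : Type*} [CommSemiring R] [Semiring B] [Algebra R B] [Semiring B'] [Algebra R B']
  [Semiring C] [Algebra R C] (f : B →ₗ[R] B')

lemma rTensor_mul_one_tmul (t : B ⊗[R] C) (c : C) :
    f.rTensor C (t * (1 ⊗ₜ c)) = f.rTensor C t * (1 ⊗ₜ c) := by
  induction t <;> simp_all [add_mul]

lemma rTensor_one_tmul_mul (c : C) (t : B ⊗[R] C) :
    f.rTensor C ((1 ⊗ₜ c) * t) = (1 ⊗ₜ c) * f.rTensor C t := by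
  induction t <;> simp_all [mul_add]

lemma lTensor_mul_tmul_one (t : C ⊗[R] B) (c : C) :
    f.lTensor C (t * (c ⊗ₜ 1)) = f.lTensor C t * (c ⊗ₜ 1) := by
  induction t <;> simp_all [add_mul]

lemma lTensor_tmul_one_mul (c : C) (t : C ⊗[R] B) :
    f.lTensor C ((c ⊗ₜ 1) * t) = (c ⊗ₜ 1) * f.lTensor C t := by
  induction t <;> simp_all [mul_add]

end TensorMul

section GroupLikeProjection

variable {k} {P : A}

lemma mem_NPlSet {x : A} : x ∈ NPlSet k P ↔ (1 ⊗ₜ[k] P) * comul x = x ⊗ₜ[k] P := Iff.rfl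

lemma mem_NPrSet {x : A} : x ∈ NPrSet k P ↔ comul x * (1 ⊗ₜ[k] P) = x ⊗ₜ[k] P := Iff.rfl

lemma mul_mem_NPlSet {x y : A} (hx : x ∈ NPlSet k P) (hy : y ∈ NPlSet k P) :
    x * y ∈ NPlSet k P :=
  calc (1 ⊗ₜ P) * comul (x * y)
      = (1 ⊗ₜ P) * comul x * comul y := by rw [Bialgebra.comul_mul, mul_assoc]
    _ = (x ⊗ₜ 1) * ((1 ⊗ₜ[k] P) * comul y) := by rw [mem_NPlSet.1 hx, ← mul_assoc]; simp
    _ = (x * y) ⊗ₜ P := by rw [mem_NPlSet.1 hy]; simp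

lemma mul_mem_NPrSet {x y : A} (hx : x ∈ NPrSet k P) (hy : y ∈ NPrSet k P) :
    x * y ∈ NPrSet k P :=
  calc comul (x * y) * (1 ⊗ₜ P)
      = comul x * (comul y * (1 ⊗ₜ P)) := by rw [Bialgebra.comul_mul, mul_assoc]
    _ = comul x * (1 ⊗ₜ[k] P) * (y ⊗ₜ 1) := by rw [mem_NPrSet.1 hy, mul_assoc]; simp
    _ = (x * y) ⊗ₜ P := by rw [mem_NPrSet.1 hx]; simp

variable (k P) in
/-- The subalgebra `N_P` attached to an element `P`, with underlying set `NPSet k P`. -/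
def NPSubalgebra : Subalgebra k A where
  carrier := NPSet k P
  mul_mem' hx hy := ⟨mul_mem_NPlSet hx.1 hy.1, mul_mem_NPrSet hx.2 hy.2⟩
  add_mem' := by
    rintro x y ⟨hxl, hxr⟩ ⟨hyl, hyr⟩
    rw [mem_NPlSet] at hxl hyl
    rw [mem_NPrSet] at hxr hyr
    exact ⟨by rw [mem_NPlSet, map_add, mul_add, hxl, hyl, add_tmul],
      by rw [mem_NPrSet, map_add, add_mul, hxr, hyr, add_tmul]⟩
  algebraMap_mem' r := by
    constructor <;> simp [mem_NPlSet, mem_NPrSet]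

lemma IsRightGroupLikeProjection.counit_eq_one (hP : IsRightGroupLikeProjection k P) :
    counit (R := k) P = 1 := by
  obtain ⟨hne, hidem, hmul, -⟩ := hP
  have hcounit : counit P ⊗ₜ P = (1 : k) ⊗ₜ[k] P :=
    calc counit P ⊗ₜ[k] P = counit.rTensor A (comul P * (1 ⊗ₜ P)) := by rw [hmul, rTensor_tmul]
      _ = 1 ⊗ₜ P := by simp [rTensor_mul_one_tmul, hidem]
  exact smul_left_injective k hne (by simpa using congr(TensorProduct.lid k A $hcounit))

lemma IsTwoSidedGroupLikeProjection.antipode_eq (hP : IsTwoSidedGroupLikeProjection k P) :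
    antipode k P = P := by
  have hmul (a b : A) :
      mul' k A ((antipode k).rTensor A (comul P * (a ⊗ₜ b))) = antipode k a * b := by
    simp [mul'_rTensor_antipode_mul_tmul, hP.1.counit_eq_one]
  obtain ⟨⟨-, -, hright, -⟩, -, -, hleft, -⟩ := hP
  calc antipode k P = mul' k A ((antipode k).rTensor A (P ⊗ₜ P)) := by
        rw [← hleft, hmul, mul_one]
    _ = P := by rw [← hright, hmul, antipode_one, one_mul]

lemma IsRightGroupLikeProjection.VPSet_subset_NPSet (hP : IsRightGroupLikeProjection k P) :
    VPSet k P ⊆ NPSet k P := by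
  rintro _ ⟨μ, rfl⟩
  let θ := leftSlice A μ ∘ₗ comul
  have hθ : comul (θ P) = θ.rTensor A (comul P) := comul_leftSlice_comul μ P
  constructor
  · calc (1 ⊗ₜ P) * comul (θ P) = θ.rTensor A ((1 ⊗ₜ P) * comul P) := by
          rw [hθ, rTensor_one_tmul_mul]
      _ = θ P ⊗ₜ P := by rw [hP.2.2.2, rTensor_tmul]
  · calc comul (θ P) * (1 ⊗ₜ P) = θ.rTensor A (comul P * (1 ⊗ₜ P)) := by
          rw [hθ, rTensor_mul_one_tmul]
      _ = θ P ⊗ₜ P := by rw [hP.2.2.1, rTensor_tmul]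

lemma IsLeftGroupLikeProjection.tmul_one_mul_comul_rightSlice (hP : IsLeftGroupLikeProjection k P)
    (ν : A →ₗ[k] k) :
    (P ⊗ₜ[k] 1) * comul (rightSlice A ν (comul P)) = P ⊗ₜ rightSlice A ν (comul P) := by
  rw [comul_rightSlice_comul, ← lTensor_tmul_one_mul, hP.2.2.2]
  rfl

lemma IsLeftGroupLikeProjection.comul_rightSlice_mul_tmul_one (hP : IsLeftGroupLikeProjection k P)
    (ν : A →ₗ[k] k) :
    comul (rightSlice A ν (comul P)) * (P ⊗ₜ[k] 1) = P ⊗ₜ rightSlice A ν (comul P) := by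
  rw [comul_rightSlice_comul, ← lTensor_mul_tmul_one, hP.2.2.1]
  rfl

lemma antipode_mem_NPSet {x : A} (hP : antipode k P = P)
    (hleft : (P ⊗ₜ[k] 1) * comul x = P ⊗ₜ[k] x) (hright : comul x * (P ⊗ₜ[k] 1) = P ⊗ₜ[k] x) :
    antipode k x ∈ NPSet k P := by
  have hflip : (1 : A) ⊗ₜ[k] P =
      map (antipode k) (antipode k) (TensorProduct.comm k A A (P ⊗ₜ 1)) := by simp [hP]
  constructor
  · rw [mem_NPlSet, comul_antipode, hflip, ← map_antipode_comm_mul, hright]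
    simp [hP]
  · rw [mem_NPrSet, comul_antipode, hflip, ← map_antipode_comm_mul, hleft]
    simp [hP]

namespace IsTwoSidedGroupLikeProjection

lemma leftSlice_translationMap_mem (hP : IsTwoSidedGroupLikeProjection k P) (μ : A →ₗ[k] k) :
    leftSlice A μ (translationMap k P) ∈ NPSet k P :=
  hP.1.VPSet_subset_NPSet ⟨μ ∘ₗ antipode k, leftSlice_rTensor ..⟩

lemma rightSlice_translationMap_mem (hP : IsTwoSidedGroupLikeProjection k P) (ν : A →ₗ[k] k) :
    rightSlice A ν (translationMap k P) ∈ NPSet k P := by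
  rw [translationMap, LinearMap.comp_apply, rightSlice_rTensor]
  exact antipode_mem_NPSet hP.antipode_eq (hP.2.tmul_one_mul_comul_rightSlice ν)
    (hP.2.comul_rightSlice_mul_tmul_one ν)

lemma exists_isSeparabilityElement (hP : IsTwoSidedGroupLikeProjection k P) :
    ∃ e : NPSubalgebra k P ⊗[k] NPSubalgebra k P, IsSeparabilityElement e :=
  exists_isSeparabilityElement_of_slices_mem _
    (by rw [mul'_translationMap, hP.1.counit_eq_one, map_one])
    (fun _ hx => tmul_one_mul_translationMap hx.1)
    hP.rightSlice_translationMap_mem hP.leftSlice_translationMap_mem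

end IsTwoSidedGroupLikeProjection

end GroupLikeProjection

theorem statement6_general (P : A) (hP : IsTwoSidedGroupLikeProjection k P) :
    ∃ N : Subalgebra k A, (N : Set A) = NPSet k P ∧ IsSemisimpleRing N := by
  obtain ⟨e, he⟩ := hP.exists_isSeparabilityElement
  exact ⟨NPSubalgebra k P, rfl, he.isSemisimpleModule _⟩

/-- Theorem: for a two-sided group-like projection `P`, the left coideal subalgebra
`N_P` is a semisimple ring. -/
theorem statement6
    (hS : Function.Bijective (HopfAlgebra.antipode (R := k) : A →ₗ[k] A))
    (P : A) (hP : IsTwoSidedGroupLikeProjection k P) :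
    ∃ N : Subalgebra k A, (N : Set A) = NPSet k P ∧ IsSemisimpleRing N :=
  statement6_general k P hP
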